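/- Let f be a smooth nonnegative function on ℝⁿ × (0,1] with ∂ₜ f ≤ Δ f pointwise, with f(·,t) → 0 in L²_loc(ℝⁿ) as t → 0⁺, and such that ∫₀¹ ∫_{B(0,r)} f² dx dt < ∞ and sup_{0<s<1} ∫_{B(0,r)} f(x,s)² dx < ∞ for every r > 0. Then for every R > 0 and every real m ≥ 2, ∫_{B(0,R)} f(x,t)² dx = o(tᵐ) as t → 0⁺; in particular lim_{t→0⁺} (1/t) ∫_{B(0,R)} f(x,t)² dx = 0. -/

import Mathlib

open MeasureTheory Filter Set Metric Asymptotics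

/-- The Euclidean Laplacian of `g : ℝⁿ → ℝ`. -/
noncomputable def heatLap {n : ℕ} (g : EuclideanSpace ℝ (Fin n) → ℝ)
    (x : EuclideanSpace ℝ (Fin n)) : ℝ :=
  ∑ i : Fin n, fderiv ℝ (fun y => fderiv ℝ g y (EuclideanSpace.single i (1 : ℝ))) x
    (EuclideanSpace.single i (1 : ℝ))

/-- Differentiation under the integral sign against a compactly supported weight. -/
theorem hasDerivAt_integral_mul_of_contDiffOn {E : Type*} [NormedAddCommGroup E]
    [NormedSpace ℝ E] [MeasurableSpace E] [BorelSpace E] [SecondCountableTopology E]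
    {μ : Measure E} [IsFiniteMeasureOnCompacts μ] {U : Set ℝ} (hU : IsOpen U)
    {F : ℝ → E → ℝ} (hF : ContDiffOn ℝ 1 (fun p : ℝ × E => F p.1 p.2) (U ×ˢ univ))
    {φ : E → ℝ} (hφ : Continuous φ) (hφc : HasCompactSupport φ) {t : ℝ} (ht : t ∈ U) :
    Integrable (fun x => φ x * deriv (fun s => F s x) t) μ ∧
      HasDerivAt (fun s => ∫ x, φ x * F s x ∂μ) (∫ x, φ x * deriv (fun s => F s x) t ∂μ) t := by
  set G : ℝ × E → ℝ := fun p => F p.1 p.2 with hG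
  have hO : IsOpen (U ×ˢ (univ : Set E)) := hU.prod isOpen_univ
  have hdiff : ∀ s ∈ U, ∀ x, HasDerivAt (fun s => F s x) (fderiv ℝ G (s, x) (1, 0)) s := by
    intro s hs x
    have h1 : HasFDerivAt G (fderiv ℝ G (s, x)) (s, x) :=
      ((hF.differentiableOn one_ne_zero).differentiableAt
        (hO.mem_nhds ⟨hs, mem_univ x⟩)).hasFDerivAt
    have h2 : HasDerivAt (fun s : ℝ => (s, x)) ((1 : ℝ), (0 : E)) s :=
      (hasDerivAt_id s).prodMk (hasDerivAt_const s x)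
    exact h1.comp_hasDerivAt s h2
  have hcont : ContinuousOn (fun p => fderiv ℝ G p (1, 0)) (U ×ˢ (univ : Set E)) :=
    (hF.continuousOn_fderiv_of_isOpen hO le_rfl).clm_apply continuousOn_const
  have hFs : ∀ s ∈ U, Continuous (F s) := fun s hs => by
    rw [← continuousOn_univ]
    exact hF.continuousOn.comp (f := fun x : E => (s, x)) (by fun_prop) fun x hx => ⟨hs, hx⟩
  have hDt : Continuous fun x => fderiv ℝ G (t, x) (1, 0) := by
    rw [← continuousOn_univ]
    exact hcont.comp (f := fun x : E => (t, x)) (by fun_prop) fun x hx => ⟨ht, hx⟩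
  obtain ⟨ε, hε, hεU⟩ := Metric.nhds_basis_closedBall.mem_iff.1 (hU.mem_nhds ht)
  obtain ⟨C, hC⟩ := ((isCompact_closedBall t ε).prod hφc).exists_bound_of_continuousOn
    (hcont.mono (prod_mono hεU (subset_univ _)))
  have key := hasDerivAt_integral_of_dominated_loc_of_deriv_le (μ := μ)
    (F := fun s x => φ x * F s x) (F' := fun s x => φ x * fderiv ℝ G (s, x) (1, 0))
    (bound := fun x => ‖φ x‖ * C) (x₀ := t) (closedBall_mem_nhds t hε)
    (by
      filter_upwards [hU.mem_nhds ht] with s hs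
      exact (hφ.mul (hFs s hs)).aestronglyMeasurable)
    ((hφ.mul (hFs t ht)).integrable_of_hasCompactSupport hφc.mul_right)
    (hφ.mul hDt).aestronglyMeasurable
    (by
      refine ae_of_all _ fun x s hs => ?_
      rw [norm_mul]
      by_cases hx : x ∈ tsupport φ
      · exact mul_le_mul_of_nonneg_left (hC (s, x) ⟨hs, hx⟩) (norm_nonneg _)
      · simp [image_eq_zero_of_notMem_tsupport hx])
    ((hφ.norm.mul continuous_const).integrable_of_hasCompactSupport hφc.norm.mul_right)
    (ae_of_all _ fun x s hs => (hdiff s (hεU hs) x).const_mul (φ x))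
  simpa only [fun x => (hdiff t ht x).deriv] using key

section Laplacian

variable {n : ℕ}

theorem contDiff_fderiv_apply_const {g : EuclideanSpace ℝ (Fin n) → ℝ}
    (hg : ContDiff ℝ (⊤ : ℕ∞) g) (v : EuclideanSpace ℝ (Fin n)) :
    ContDiff ℝ (⊤ : ℕ∞) fun y => fderiv ℝ g y v :=
  (hg.fderiv_right (m := (⊤ : ℕ∞)) (by simp)).clm_apply contDiff_const

theorem continuous_heatLap {g : EuclideanSpace ℝ (Fin n) → ℝ}
    (hg : ContDiff ℝ (⊤ : ℕ∞) g) : Continuous (heatLap g) :=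
  continuous_finsetSum _ fun _ _ =>
    (contDiff_fderiv_apply_const (contDiff_fderiv_apply_const hg _) _).continuous

theorem support_heatLap_subset (g : EuclideanSpace ℝ (Fin n) → ℝ) :
    Function.support (heatLap g) ⊆ tsupport g := by
  intro x hx
  contrapose! hx
  rw [Function.mem_support, not_not]
  refine Finset.sum_eq_zero fun i _ => ?_
  set v := EuclideanSpace.single i (1 : ℝ)
  exact image_eq_zero_of_notMem_tsupport (f := fun z => fderiv ℝ (fun y => fderiv ℝ g y v) z v)
    fun h => hx (tsupport_fderiv_apply_subset ℝ v (tsupport_fderiv_apply_subset ℝ v h))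

theorem two_mul_mul_heatLap_le_heatLap_sq {g : EuclideanSpace ℝ (Fin n) → ℝ}
    (hg : ContDiff ℝ (⊤ : ℕ∞) g) (x : EuclideanSpace ℝ (Fin n)) :
    2 * g x * heatLap g x ≤ heatLap (fun y => g y ^ 2) x := by
  have hd : Differentiable ℝ g := hg.differentiable (by simp)
  unfold heatLap
  rw [Finset.mul_sum]
  refine Finset.sum_le_sum fun i _ => ?_
  set v := EuclideanSpace.single i (1 : ℝ)
  have hd' : Differentiable ℝ fun y => fderiv ℝ g y v :=
    (contDiff_fderiv_apply_const hg v).differentiable (by simp)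
  have h1 : (fun y => fderiv ℝ (fun y => g y ^ 2) y v) = fun y => 2 * g y * fderiv ℝ g y v := by
    ext y
    rw [((hd y).hasFDerivAt.pow 2).fderiv]
    simp
  have h2 : HasFDerivAt (fun y => 2 * g y * fderiv ℝ g y v) _ x :=
    ((hd x).hasFDerivAt.const_mul 2).mul (hd' x).hasFDerivAt
  rw [h1, h2.fderiv]
  simp only [add_apply, smul_apply, smul_eq_mul]
  nlinarith [sq_nonneg (fderiv ℝ g x v)]

/-- Green's second identity for a compactly supported test function. -/
theorem integral_mul_heatLap_comm {φ u : EuclideanSpace ℝ (Fin n) → ℝ}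
    (hφ : ContDiff ℝ (⊤ : ℕ∞) φ) (hφc : HasCompactSupport φ) (hu : ContDiff ℝ (⊤ : ℕ∞) u) :
    ∫ x, φ x * heatLap u x = ∫ x, heatLap φ x * u x := by
  have parts : ∀ (a b : EuclideanSpace ℝ (Fin n) → ℝ) (v : EuclideanSpace ℝ (Fin n)),
      ContDiff ℝ (⊤ : ℕ∞) a → HasCompactSupport a → ContDiff ℝ (⊤ : ℕ∞) b →
      ∫ x, a x * fderiv ℝ b x v = - ∫ x, fderiv ℝ a x v * b x := by
    intro a b v ha hac hb
    have ha' := (contDiff_fderiv_apply_const ha v).continuous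
    have hb' := (contDiff_fderiv_apply_const hb v).continuous
    exact integral_mul_fderiv_eq_neg_fderiv_mul_of_integrable
      ((ha'.mul hb.continuous).integrable_of_hasCompactSupport
        (hac.fderiv_apply (𝕜 := ℝ) v).mul_right)
      ((ha.continuous.mul hb').integrable_of_hasCompactSupport hac.mul_right)
      ((ha.continuous.mul hb.continuous).integrable_of_hasCompactSupport hac.mul_right)
      (fun x _ => (ha.differentiable (by simp)) x)
      (fun x _ => (hb.differentiable (by simp)) x)
  simp only [heatLap, Finset.mul_sum, Finset.sum_mul]
  rw [integral_finsetSum, integral_finsetSum]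
  · refine Finset.sum_congr rfl fun i _ => ?_
    set v := EuclideanSpace.single i (1 : ℝ)
    rw [parts φ _ v hφ hφc (contDiff_fderiv_apply_const hu v),
      parts _ u v (contDiff_fderiv_apply_const hφ v) (hφc.fderiv_apply (𝕜 := ℝ) v) hu, neg_neg]
  · intro i _
    exact ((contDiff_fderiv_apply_const (contDiff_fderiv_apply_const hφ _) _).continuous.mul
      hu.continuous).integrable_of_hasCompactSupport
      ((hφc.fderiv_apply (𝕜 := ℝ) _).fderiv_apply (𝕜 := ℝ) _).mul_right
  · intro i _
    exact (hφ.continuous.mul (contDiff_fderiv_apply_const (contDiff_fderiv_apply_const hu _)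
      _).continuous).integrable_of_hasCompactSupport hφc.mul_right

/-- Weighted energy inequality for a nonnegative subsolution of the heat equation. -/
theorem hasDerivAt_integral_mul_sq_le_of_subsolution
    {f : ℝ → EuclideanSpace ℝ (Fin n) → ℝ} {U : Set ℝ} (hU : IsOpen U)
    (hf : ContDiffOn ℝ (⊤ : ℕ∞)
      (fun p : ℝ × EuclideanSpace ℝ (Fin n) => f p.1 p.2) (U ×ˢ univ))
    {t : ℝ} (ht : t ∈ U) (hf_nonneg : ∀ x, 0 ≤ f t x)
    (hf_sub : ∀ x, deriv (fun s => f s x) t ≤ heatLap (f t) x)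
    {φ : EuclideanSpace ℝ (Fin n) → ℝ} (hφ : ContDiff ℝ (⊤ : ℕ∞) φ)
    (hφc : HasCompactSupport φ) (hφ0 : ∀ x, 0 ≤ φ x) :
    ∃ d ≤ ∫ x, heatLap φ x * f t x ^ 2, HasDerivAt (fun s => ∫ x, φ x * f s x ^ 2) d t := by
  have hft : ContDiff ℝ (⊤ : ℕ∞) (f t) := by
    rw [← contDiffOn_univ]
    exact hf.comp (f := fun x : EuclideanSpace ℝ (Fin n) => (t, x))
      (contDiff_prodMk_right t).contDiffOn fun x hx => ⟨ht, hx⟩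
  obtain ⟨hi, hd⟩ := hasDerivAt_integral_mul_of_contDiffOn (μ := volume) hU
    (F := fun s x => f s x ^ 2) ((hf.of_le (by simp)).pow 2) hφ.continuous hφc ht
  refine ⟨_, ?_, hd⟩
  rw [← integral_mul_heatLap_comm hφ hφc (hft.pow 2)]
  refine integral_mono hi ((hφ.continuous.mul
    (continuous_heatLap (hft.pow 2))).integrable_of_hasCompactSupport hφc.mul_right) fun x => ?_
  refine mul_le_mul_of_nonneg_left ?_ (hφ0 x)
  refine le_trans ?_ (two_mul_mul_heatLap_le_heatLap_sq hft x)
  have hdx : DifferentiableAt ℝ (fun s => f s x) t := by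
    have h1 := (hf.differentiableOn (by simp)).differentiableAt
      ((hU.prod isOpen_univ).mem_nhds (x := (t, x)) ⟨ht, mem_univ x⟩)
    exact h1.comp t (f := fun s : ℝ => (s, x)) (by fun_prop)
  rw [(hdx.hasDerivAt.fun_pow 2).deriv]
  have := mul_le_mul_of_nonneg_left (hf_sub x) (mul_nonneg zero_le_two (hf_nonneg x))
  simpa using this

end Laplacian

/-- If `e → 0` at `0⁺` and `e' ≤ C t ^ k` on `(0,1)`, then `e t ≤ C t ^ (k + 1)` there. -/
theorem le_mul_pow_succ_of_hasDerivAt_le {e : ℝ → ℝ} {C : ℝ} (hC : 0 ≤ C) (k : ℕ)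
    (he0 : Tendsto e (nhdsWithin 0 (Ioi 0)) (nhds 0))
    (hd : ∀ t ∈ Ioo (0 : ℝ) 1, ∃ d ≤ C * t ^ k, HasDerivAt e d t) :
    ∀ t ∈ Ioo (0 : ℝ) 1, e t ≤ C * t ^ (k + 1) := by
  set h : ℝ → ℝ := fun t => e t - C * t ^ (k + 1) with hh
  have hder : ∀ t ∈ Ioo (0 : ℝ) 1, ∃ d ≤ (0 : ℝ), HasDerivAt h d t := by
    intro t ht
    obtain ⟨d, hdle, hd⟩ := hd t ht
    refine ⟨_, ?_, hd.sub ((hasDerivAt_pow (k + 1) t).const_mul C)⟩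
    have h1 : 0 ≤ C * (k * t ^ k) :=
      mul_nonneg hC (mul_nonneg k.cast_nonneg (pow_nonneg ht.1.le _))
    push_cast [Nat.add_sub_cancel]
    linarith
  have hanti : AntitoneOn h (Ioo 0 1) := by
    refine antitoneOn_of_deriv_nonpos (convex_Ioo 0 1) (fun t ht => ?_) (fun t ht => ?_)
      fun t ht => ?_
    · obtain ⟨d, _, hd⟩ := hder t ht
      exact hd.continuousAt.continuousWithinAt
    · obtain ⟨d, _, hd⟩ := hder t (interior_subset ht)
      exact hd.differentiableAt.differentiableWithinAt
    · obtain ⟨d, hle, hd⟩ := hder t (interior_subset ht)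
      exact hd.deriv.trans_le hle
  have hlim : Tendsto h (nhdsWithin 0 (Ioi 0)) (nhds 0) := by
    have h1 : Tendsto (fun t : ℝ => C * t ^ (k + 1)) (nhdsWithin 0 (Ioi 0)) (nhds 0) := by
      have : Continuous fun t : ℝ => C * t ^ (k + 1) := by fun_prop
      simpa using (this.tendsto 0).mono_left nhdsWithin_le_nhds
    simpa using he0.sub h1
  intro t ht
  have : h t ≤ 0 := by
    refine ge_of_tendsto hlim ?_
    filter_upwards [Ioo_mem_nhdsGT ht.1] with s hs
    exact hanti ⟨hs.1, hs.2.trans ht.2⟩ ht hs.2.le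
  exact sub_nonpos.1 this

/-- **Vanishing order of the local `L²` norm.** For a nonnegative smooth subsolution of
the heat equation on `ℝⁿ × (0,1]` with zero initial data in `L²_loc`, locally finite
space-time `L²` integral and locally bounded spatial `L²` norms, the local spatial `L²`
integral is `o(tᵐ)` as `t → 0⁺` for every `m ≥ 2`; in particular
`(1/t) ∫_{B(0,R)} f(t)² → 0`. -/
theorem heat_subsolution_L2_vanishing_order {n : ℕ}
    (f : ℝ → EuclideanSpace ℝ (Fin n) → ℝ)
    (hf_smooth : ContDiffOn ℝ (⊤ : ℕ∞)
      (fun p : ℝ × EuclideanSpace ℝ (Fin n) => f p.1 p.2) (Set.Ioc (0:ℝ) 1 ×ˢ Set.univ))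
    (hf_nonneg : ∀ t ∈ Set.Ioc (0:ℝ) 1, ∀ x, 0 ≤ f t x)
    (hf_subsol : ∀ t ∈ Set.Ioc (0:ℝ) 1, ∀ x, deriv (fun s => f s x) t ≤ heatLap (f t) x)
    (hf_init : ∀ R > (0:ℝ),
      Tendsto (fun t => ∫⁻ x in ball (0 : EuclideanSpace ℝ (Fin n)) R,
        ENNReal.ofReal ((f t x) ^ 2)) (nhdsWithin 0 (Set.Ioi 0)) (nhds 0))
    (hf_loc_int : ∀ r > (0:ℝ),
      ∫⁻ t in Set.Ioc (0:ℝ) 1, ∫⁻ x in ball (0 : EuclideanSpace ℝ (Fin n)) r,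
        ENNReal.ofReal ((f t x) ^ 2) < ⊤)
    (hf_loc_sup : ∀ r > (0:ℝ), ∃ M : ℝ, ∀ s ∈ Set.Ioo (0:ℝ) 1,
      (∫ x in ball (0 : EuclideanSpace ℝ (Fin n)) r, (f s x) ^ 2) ≤ M) :
    ∀ R > (0:ℝ), ∀ m : ℝ, 2 ≤ m →
      ((fun t => ∫ x in ball (0 : EuclideanSpace ℝ (Fin n)) R, (f t x) ^ 2)
        =o[nhdsWithin (0:ℝ) (Set.Ioi 0)] fun t => t ^ m) ∧
      Tendsto (fun t => (1 / t) * ∫ x in ball (0 : EuclideanSpace ℝ (Fin n)) R, (f t x) ^ 2)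
        (nhdsWithin (0:ℝ) (Set.Ioi 0)) (nhds 0) := by
  intro R hR m hm
  have hcont : ∀ t ∈ Ioo (0 : ℝ) 1, Continuous (f t) := fun t ht => by
    rw [← continuousOn_univ]
    exact hf_smooth.continuousOn.comp (f := fun x : EuclideanSpace ℝ (Fin n) => (t, x))
      (by fun_prop) fun x hx => ⟨Ioo_subset_Ioc_self ht, hx⟩
  have hint : ∀ t ∈ Ioo (0 : ℝ) 1, ∀ r,
      IntegrableOn (fun x => f t x ^ 2) (ball (0 : EuclideanSpace ℝ (Fin n)) r) := fun t ht r =>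
    (((hcont t ht).pow 2).continuousOn.integrableOn_compact
      (isCompact_closedBall 0 r)).mono_set ball_subset_closedBall
  have hev : ∀ᶠ t in nhdsWithin (0 : ℝ) (Ioi 0), t ∈ Ioo (0 : ℝ) 1 := Ioo_mem_nhdsGT one_pos
  have hinit : ∀ r > (0 : ℝ), Tendsto
      (fun t => ∫ x in ball (0 : EuclideanSpace ℝ (Fin n)) r, f t x ^ 2)
      (nhdsWithin 0 (Ioi 0)) (nhds 0) := by
    intro r hr
    have h1 := (ENNReal.tendsto_toReal ENNReal.zero_ne_top).comp (hf_init r hr)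
    refine h1.congr' ?_
    filter_upwards [hev] with t ht
    exact (integral_eq_lintegral_of_nonneg_ae (ae_of_all _ fun x => sq_nonneg _)
      (hint t ht r).aestronglyMeasurable).symm
  have bound : ∀ k : ℕ, ∀ r > (0 : ℝ), ∃ C ≥ (0 : ℝ), ∀ t ∈ Ioo (0 : ℝ) 1,
      ∫ x in ball (0 : EuclideanSpace ℝ (Fin n)) r, f t x ^ 2 ≤ C * t ^ k := by
    intro k
    induction k with
    | zero =>
      intro r hr
      obtain ⟨M, hM⟩ := hf_loc_sup r hr
      exact ⟨|M|, abs_nonneg M, fun t ht => by simpa using (hM t ht).trans (le_abs_self M)⟩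
    | succ k ih =>
      intro r hr
      let φ : ContDiffBump (0 : EuclideanSpace ℝ (Fin n)) := ⟨r, r + 1, hr, by linarith⟩
      have hφc : HasCompactSupport φ := φ.hasCompactSupport
      have hφ : ContDiff ℝ (⊤ : ℕ∞) φ := φ.contDiff
      have hts : tsupport φ ⊆ ball (0 : EuclideanSpace ℝ (Fin n)) (r + 2) := by
        rw [φ.tsupport_eq]
        exact closedBall_subset_ball (show r + 1 < r + 2 by linarith)
      obtain ⟨C, hC0, hC⟩ := ih (r + 2) (by linarith)
      have hLc : HasCompactSupport (heatLap φ) := hφc.mono' (support_heatLap_subset φ)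
      obtain ⟨L, hL⟩ := hLc.exists_bound_of_continuous (continuous_heatLap hφ)
      have hL0 : 0 ≤ L := (norm_nonneg _).trans (hL 0)
      have weight : ∀ (ψ : EuclideanSpace ℝ (Fin n) → ℝ) (A : ℝ), Continuous ψ →
          Function.support ψ ⊆ tsupport φ → (∀ x, ψ x ≤ A) → ∀ t ∈ Ioo (0 : ℝ) 1,
          ∫ x, ψ x * f t x ^ 2 ≤
            A * ∫ x in ball (0 : EuclideanSpace ℝ (Fin n)) (r + 2), f t x ^ 2 := by
        intro ψ A hψ hψs hA t ht
        rw [← integral_const_mul, ← setIntegral_eq_integral_of_forall_compl_eq_zero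
          (s := ball (0 : EuclideanSpace ℝ (Fin n)) (r + 2))]
        · refine setIntegral_mono_on ?_ ((hint t ht _).const_mul A) measurableSet_ball
            fun x _ => mul_le_mul_of_nonneg_right (hA x) (sq_nonneg _)
          exact ((hψ.mul ((hcont t ht).pow 2)).continuousOn.integrableOn_compact
            (isCompact_closedBall 0 (r + 2))).mono_set ball_subset_closedBall
        · intro x hx
          have : ψ x = 0 := by
            by_contra h
            exact hx (hts (hψs h))
          simp [this]
      have he0 : Tendsto (fun t => ∫ x, φ x * f t x ^ 2) (nhdsWithin 0 (Ioi 0)) (nhds 0) := by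
        refine squeeze_zero' (Eventually.of_forall fun t => integral_nonneg fun x =>
          mul_nonneg φ.nonneg (sq_nonneg _)) ?_ (hinit (r + 2) (by linarith))
        filter_upwards [hev] with t ht
        simpa using weight φ 1 φ.continuous (subset_tsupport _) (fun x => φ.le_one) t ht
      have hmain := le_mul_pow_succ_of_hasDerivAt_le (mul_nonneg hL0 hC0) k he0 fun t ht => by
        obtain ⟨d, hd, hd'⟩ := hasDerivAt_integral_mul_sq_le_of_subsolution isOpen_Ioo
          (hf_smooth.mono (prod_mono Ioo_subset_Ioc_self subset_rfl)) ht
          (hf_nonneg t (Ioo_subset_Ioc_self ht)) (hf_subsol t (Ioo_subset_Ioc_self ht)) hφ hφc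
          (fun x => φ.nonneg)
        refine ⟨d, hd.trans ((weight _ L (continuous_heatLap hφ) (support_heatLap_subset φ)
          (fun x => (le_abs_self _).trans (hL x)) t ht).trans ?_), hd'⟩
        rw [mul_assoc]
        exact mul_le_mul_of_nonneg_left (hC t ht) hL0
      refine ⟨L * C, mul_nonneg hL0 hC0, fun t ht => le_trans ?_ (hmain t ht)⟩
      have hφi : Integrable fun x => φ x * f t x ^ 2 :=
        (hφ.continuous.mul ((hcont t ht).pow 2)).integrable_of_hasCompactSupport hφc.mul_right
      refine le_trans (le_of_eq ?_) (setIntegral_le_integral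
        (s := ball (0 : EuclideanSpace ℝ (Fin n)) r) hφi
        (ae_of_all _ fun x => mul_nonneg φ.nonneg (sq_nonneg _)))
      refine setIntegral_congr_fun measurableSet_ball fun x hx => ?_
      simp only [φ.one_of_mem_closedBall (ball_subset_closedBall hx), one_mul]
  have little : ∀ p : ℝ, 0 ≤ p →
      (fun t => ∫ x in ball (0 : EuclideanSpace ℝ (Fin n)) R, (f t x) ^ 2)
        =o[nhdsWithin (0 : ℝ) (Ioi 0)] fun t => t ^ p := by
    intro p hp
    obtain ⟨k, hk⟩ := exists_nat_gt p
    obtain ⟨C, -, hC⟩ := bound k R hR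
    have hO : (fun t => ∫ x in ball (0 : EuclideanSpace ℝ (Fin n)) R, (f t x) ^ 2)
        =O[nhdsWithin (0 : ℝ) (Ioi 0)] fun t => t ^ (k : ℝ) := by
      refine IsBigO.of_bound C ?_
      filter_upwards [hev] with t ht
      rw [Real.rpow_natCast, Real.norm_of_nonneg (integral_nonneg fun x => sq_nonneg _),
        Real.norm_of_nonneg (pow_nonneg ht.1.le _)]
      exact hC t ht
    refine hO.trans_isLittleO ?_
    refine (isLittleO_iff_tendsto' ?_).2 ?_
    · filter_upwards [hev] with t ht h
      exact absurd h (Real.rpow_pos_of_pos ht.1 p).ne'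
    · have h0 : Tendsto (fun t : ℝ => t ^ ((k : ℝ) - p)) (nhdsWithin 0 (Ioi 0)) (nhds 0) := by
        have := (Real.continuousAt_rpow_const 0 ((k : ℝ) - p) (Or.inr (by linarith))).tendsto
        rw [Real.zero_rpow (by linarith)] at this
        exact this.mono_left nhdsWithin_le_nhds
      refine h0.congr' ?_
      filter_upwards [hev] with t ht
      exact Real.rpow_sub ht.1 _ _
  refine ⟨little m (by linarith), ?_⟩
  refine (little 1 zero_le_one).tendsto_div_nhds_zero.congr fun t => ?_
  rw [Real.rpow_one, div_eq_mul_inv, one_div, mul_comm]
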